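/- Let q be a primitive ℓ-th root of unity, ℓ > 1 odd. The map sending e_i ⊗ 1 ↦ [e_i^ℓ ⊗ 1] and 1 ⊗ e_i ↦ [e_i^{ℓ−1} ⊗ e_i] defines an isomorphism of bigraded algebras from the classical algebra S(V_n) ⊗ Λ(V_n) onto the cohomology H•(Ω(n)) of the quantum de Rham complex (quantum Cartier isomorphism). -/

import Mathlib

/-- Generators of the algebra `Ω(n) = S_q(V_n) ⊗ Λ_q(V_n)`: `Sum.inl i` stands for
`x_i = e_i ⊗ 1` (symmetric generator) and `Sum.inr i` for `y_i = 1 ⊗ e_i` (exterior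
generator). -/
abbrev OmegaLetter (n : ℕ) := Fin n ⊕ Fin n

/-- The defining relations of the algebra `Ω(n) = S_q(V_n) ⊗ Λ_q(V_n)` with product
twisted by the braiding (quantum de Rham algebra). -/
inductive omegaRel (K : Type*) [Field K] (q : K) (n : ℕ) :
    FreeAlgebra K (OmegaLetter n) → FreeAlgebra K (OmegaLetter n) → Prop
  | xx {i j : Fin n} (h : j < i) :
      omegaRel K q n (FreeAlgebra.ι K (Sum.inl i) * FreeAlgebra.ι K (Sum.inl j))
        (q • (FreeAlgebra.ι K (Sum.inl j) * FreeAlgebra.ι K (Sum.inl i)))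
  | yx_gt {i j : Fin n} (h : j < i) :
      omegaRel K q n (FreeAlgebra.ι K (Sum.inr j) * FreeAlgebra.ι K (Sum.inl i))
        (FreeAlgebra.ι K (Sum.inl i) * FreeAlgebra.ι K (Sum.inr j))
  | yx_eq (i : Fin n) :
      omegaRel K q n (FreeAlgebra.ι K (Sum.inr i) * FreeAlgebra.ι K (Sum.inl i))
        (q • (FreeAlgebra.ι K (Sum.inl i) * FreeAlgebra.ι K (Sum.inr i)))
  | yx_lt {i j : Fin n} (h : i < j) :
      omegaRel K q n (FreeAlgebra.ι K (Sum.inr j) * FreeAlgebra.ι K (Sum.inl i))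
        ((q - q⁻¹) • (FreeAlgebra.ι K (Sum.inl j) * FreeAlgebra.ι K (Sum.inr i)) +
          FreeAlgebra.ι K (Sum.inl i) * FreeAlgebra.ι K (Sum.inr j))
  | yy {i j : Fin n} (h : j < i) :
      omegaRel K q n (FreeAlgebra.ι K (Sum.inr i) * FreeAlgebra.ι K (Sum.inr j))
        ((-q⁻¹) • (FreeAlgebra.ι K (Sum.inr j) * FreeAlgebra.ι K (Sum.inr i)))
  | ysq (i : Fin n) :
      omegaRel K q n (FreeAlgebra.ι K (Sum.inr i) * FreeAlgebra.ι K (Sum.inr i)) 0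

/-- The algebra `Ω(n) = S_q(V_n) ⊗ Λ_q(V_n)` with braided product, presented by
generators and relations. -/
abbrev OmegaAlg (K : Type*) [Field K] (q : K) (n : ℕ) := RingQuot (omegaRel K q n)

namespace OmegaAlg

variable (K : Type*) [Field K] (q : K) (n : ℕ)

/-- The generators of `Ω(n)`. -/
noncomputable def gen (g : OmegaLetter n) : OmegaAlg K q n :=
  RingQuot.mkAlgHom K (omegaRel K q n) (FreeAlgebra.ι K g)

/-- The symmetric generator `x_i = e_i ⊗ 1`. -/
noncomputable def X (i : Fin n) : OmegaAlg K q n := gen K q n (Sum.inl i)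

/-- The exterior generator `y_i = 1 ⊗ e_i`. -/
noncomputable def Y (i : Fin n) : OmegaAlg K q n := gen K q n (Sum.inr i)

/-- The image in `Ω(n)` of a word in the generators. -/
noncomputable def wordProd (w : List (OmegaLetter n)) : OmegaAlg K q n :=
  (w.map (gen K q n)).prod

/-- The number of symmetric letters `x` in a word. -/
def countX (w : List (OmegaLetter n)) : ℕ := (w.filter Sum.isLeft).length

/-- The number of exterior letters `y` in a word. -/
def countY (w : List (OmegaLetter n)) : ℕ := (w.filter Sum.isRight).length

/-- The bigraded piece `Ω^i_d(n) = S_q^{d-i}(n) ⊗ Λ_q^i(n)`: the span of the words with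
`d` letters, `i` of which are exterior. -/
noncomputable def piece (i d : ℕ) : Submodule K (OmegaAlg K q n) :=
  Submodule.span K {a : OmegaAlg K q n | ∃ w : List (OmegaLetter n),
    w.length = d ∧ countY n w = i ∧ a = wordProd K q n w}

/-- The property that `δ` is the quantum de Rham differential: on the word monomials of
`Ω(n)` it deconcatenates one symmetric letter (with the appropriate braiding twist) and
multiplies it into the exterior factor, replacing one `x`-letter by the corresponding
`y`-letter. -/
def IsDeRham (δ : OmegaAlg K q n →ₗ[K] OmegaAlg K q n) : Prop :=
  ∀ w : List (OmegaLetter n),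
    δ (wordProd K q n w) =
      ∑ k : Fin w.length,
        Sum.elim
          (fun i : Fin n =>
            ((-q⁻¹) ^ countY n (w.take k) * q ^ countX n (w.drop (k + 1))) •
              wordProd K q n (w.set k (Sum.inr i)))
          (fun _ : Fin n => (0 : OmegaAlg K q n))
          (w.get k)

/-- The property that `κ` is the quantum Koszul differential: on the word monomials of
`Ω(n)` it deconcatenates one exterior letter (with the appropriate braiding twist) and
multiplies it into the symmetric factor, replacing one `y`-letter by the corresponding
`x`-letter. -/
def IsKoszul (κ : OmegaAlg K q n →ₗ[K] OmegaAlg K q n) : Prop :=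
  ∀ w : List (OmegaLetter n),
    κ (wordProd K q n w) =
      ∑ k : Fin w.length,
        Sum.elim
          (fun _ : Fin n => (0 : OmegaAlg K q n))
          (fun i : Fin n =>
            ((-q⁻¹) ^ countY n (w.take k) * q ^ countX n (w.drop (k + 1))) •
              wordProd K q n (w.set k (Sum.inl i)))
          (w.get k)

end OmegaAlg

/-!
Give the monomial `x₁^a₁ y₁^b₁ ⋯ xₙ^aₙ yₙ^bₙ` the weight `w = a + b ∈ ℕⁿ`, where each `bᵢ` is `0`
or `1`. The algebra `Ω(n)` acts on a direct sum of exterior algebras of `Kⁿ`, one for each weight,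
and its orbit map through the vacuum vector is injective and turns `δ` into the wedge product with a
vector `θ_w` on the weight space `w`. The coordinates of `θ_w` are the quantum integers of the tail
sums `wᵢ + ⋯ + wₙ`, so `θ_w` vanishes exactly when `ℓ` divides every `wᵢ`. Where `θ_w ≠ 0`,
contraction by a linear form `d` with `d θ_w = 1` is a contracting homotopy; where `θ_w = 0`, `δ`
vanishes. Hence the cohomology has as basis the monomials with all weights divisible by `ℓ`, and
these are the images of the classical monomials under the algebra map `xᵢ ↦ xᵢ^ℓ`,
`yᵢ ↦ xᵢ^(ℓ-1) yᵢ`.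
-/

namespace OmegaAlg

variable {K : Type*} [Field K] {q : K} {n : ℕ}

section Relations

theorem X_mul_X_of_lt {i j : Fin n} (h : j < i) :
    X K q n i * X K q n j = q • (X K q n j * X K q n i) := by
  simpa only [X, gen, map_mul, map_smul] using RingQuot.mkAlgHom_rel K (omegaRel.xx (q := q) h)

theorem Y_mul_X_of_lt {i j : Fin n} (h : j < i) :
    Y K q n j * X K q n i = X K q n i * Y K q n j := by
  simpa only [X, Y, gen, map_mul] using RingQuot.mkAlgHom_rel K (omegaRel.yx_gt (q := q) h)

theorem Y_mul_X_self (i : Fin n) : Y K q n i * X K q n i = q • (X K q n i * Y K q n i) := by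
  simpa only [X, Y, gen, map_mul, map_smul] using
    RingQuot.mkAlgHom_rel K (omegaRel.yx_eq (q := q) i)

theorem Y_mul_X_of_gt {i j : Fin n} (h : i < j) :
    Y K q n j * X K q n i = (q - q⁻¹) • (X K q n j * Y K q n i) + X K q n i * Y K q n j := by
  simpa only [X, Y, gen, map_mul, map_smul, map_add] using
    RingQuot.mkAlgHom_rel K (omegaRel.yx_lt (q := q) h)

theorem Y_mul_Y_of_lt {i j : Fin n} (h : j < i) :
    Y K q n i * Y K q n j = (-q⁻¹) • (Y K q n j * Y K q n i) := by
  simpa only [Y, gen, map_mul, map_smul] using RingQuot.mkAlgHom_rel K (omegaRel.yy (q := q) h)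

theorem Y_mul_Y_self (i : Fin n) : Y K q n i * Y K q n i = 0 := by
  simpa only [Y, gen, map_mul, map_zero] using RingQuot.mkAlgHom_rel K (omegaRel.ysq (q := q) i)

end Relations

section Words

theorem wordProd_cons (g : OmegaLetter n) (w : List (OmegaLetter n)) :
    wordProd K q n (g :: w) = gen K q n g * wordProd K q n w := by
  simp [wordProd]

theorem wordProd_append (u v : List (OmegaLetter n)) :
    wordProd K q n (u ++ v) = wordProd K q n u * wordProd K q n v := by
  simp [wordProd]

theorem span_range_wordProd : Submodule.span K (Set.range (wordProd K q n)) = ⊤ := by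
  have hgen : Algebra.adjoin K (Set.range (gen K q n)) = ⊤ := by
    rw [show gen K q n = RingQuot.mkAlgHom K (omegaRel K q n) ∘ FreeAlgebra.ι K from rfl,
      Set.range_comp, ← AlgHom.map_adjoin, FreeAlgebra.adjoin_range_ι, Algebra.map_top,
      AlgHom.range_eq_top]
    exact RingQuot.mkAlgHom_surjective K _
  have hclosure : (Submonoid.closure (Set.range (gen K q n)) : Set (OmegaAlg K q n)) =
      Set.range (wordProd K q n) := by
    rw [← FreeMonoid.mrange_lift, MonoidHom.coe_mrange]
    exact congrArg Set.range (funext fun w => FreeMonoid.lift_apply _ w)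
  rw [← hclosure, ← Algebra.adjoin_eq_span, hgen, Algebra.top_toSubmodule]

theorem countY_append (u v : List (OmegaLetter n)) :
    countY n (u ++ v) = countY n u + countY n v := by
  simp [countY]

instance gradedMonoid_piece :
    SetLike.GradedMonoid fun b : ℕ × ℕ => piece K q n b.1 b.2 where
  one_mem := Submodule.subset_span ⟨[], rfl, rfl, rfl⟩
  mul_mem := by
    intro b b' y z hy hz
    have hyz := Submodule.mul_mem_mul hy hz
    rw [piece, piece, Submodule.span_mul_span] at hyz
    refine Submodule.span_mono ?_ hyz
    rintro _ ⟨_, ⟨u, hu, hu', rfl⟩, _, ⟨v, hv, hv', rfl⟩, rfl⟩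
    exact ⟨u ++ v, by rw [List.length_append, hu, hv, Prod.snd_add],
      by rw [countY_append, hu', hv', Prod.fst_add], (wordProd_append u v).symm⟩

theorem X_mem_piece (i : Fin n) : X K q n i ∈ piece K q n 0 1 :=
  Submodule.subset_span ⟨[Sum.inl i], rfl, rfl, by simp [wordProd, X]⟩

theorem Y_mem_piece (i : Fin n) : Y K q n i ∈ piece K q n 1 1 :=
  Submodule.subset_span ⟨[Sum.inr i], rfl, rfl, by simp [wordProd, Y]⟩

end Words

section Monomials

/-- The quantum integer `1 + q² + ⋯ + q^(2(a-1))`, the coefficient in `δ(xᵃ) = [a] xᵃ⁻¹ y`. -/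
def qInt (q : K) (a : ℕ) : K := ∑ t ∈ Finset.range a, (q ^ 2) ^ t

theorem qInt_zero (q : K) : qInt q 0 = 0 := rfl

theorem qInt_succ (q : K) (a : ℕ) : qInt q (a + 1) = qInt q a + (q ^ 2) ^ a :=
  Finset.sum_range_succ _ _

theorem X_mul_X_pow_of_lt {i j : Fin n} (h : i < j) (a : ℕ) :
    X K q n j * X K q n i ^ a = q ^ a • (X K q n i ^ a * X K q n j) := by
  induction a with
  | zero => simp
  | succ a ih =>
    rw [pow_succ, ← mul_assoc, ih, smul_mul_assoc, mul_assoc, X_mul_X_of_lt h, mul_smul_comm,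
      smul_smul, mul_assoc, pow_succ]

theorem Y_mul_X_pow_self (i : Fin n) (a : ℕ) :
    Y K q n i * X K q n i ^ a = q ^ a • (X K q n i ^ a * Y K q n i) := by
  induction a with
  | zero => simp
  | succ a ih =>
    rw [pow_succ, ← mul_assoc, ih, smul_mul_assoc, mul_assoc, Y_mul_X_self, mul_smul_comm,
      smul_smul, mul_assoc, pow_succ]

theorem Y_mul_X_pow_of_gt {i j : Fin n} (h : i < j) (a : ℕ) :
    Y K q n j * X K q n i ^ a = X K q n i ^ a * Y K q n j +
      ((q - q⁻¹) * qInt q a) • (X K q n i ^ (a - 1) * (Y K q n i * X K q n j)) := by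
  rcases a with _ | a
  · simp [qInt_zero]
  rw [Nat.add_sub_cancel]
  induction a with
  | zero => simp [qInt_succ, qInt_zero, Y_mul_X_of_gt h, Y_mul_X_of_lt h, add_comm]
  | succ a ih =>
    have hswap : X K q n j * Y K q n i * X K q n i ^ (a + 1) =
        (q ^ 2) ^ (a + 1) • (X K q n i ^ (a + 1) * (Y K q n i * X K q n j)) := by
      rw [mul_assoc, Y_mul_X_pow_self, mul_smul_comm, ← mul_assoc, X_mul_X_pow_of_lt h,
        smul_mul_assoc, smul_smul, mul_assoc, Y_mul_X_of_lt h, ← mul_pow, ← sq]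
    rw [pow_succ', ← mul_assoc, Y_mul_X_of_gt h, add_mul, smul_mul_assoc, hswap, mul_assoc, ih,
      mul_add, mul_smul_comm, pow_succ' (X K q n i) a, qInt_succ q (a + 1)]
    simp only [mul_assoc]
    module

/-- The monomial `xᵢᵃ yᵢᵇ` in the variables of index `i`, where `b ∈ {0, 1}` is a Boolean. -/
noncomputable def block (q : K) (i : Fin n) (p : ℕ × Bool) : OmegaAlg K q n :=
  X K q n i ^ p.1 * if p.2 then Y K q n i else 1

theorem block_false (i : Fin n) (a : ℕ) : block q i (a, false) = X K q n i ^ a := by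
  simp [block]

theorem block_true (i : Fin n) (a : ℕ) : block q i (a, true) = X K q n i ^ a * Y K q n i := by
  simp [block]

theorem X_mul_block_self (i : Fin n) (p : ℕ × Bool) :
    X K q n i * block q i p = block q i (p.1 + 1, p.2) := by
  simp [block, pow_succ', mul_assoc]

theorem X_mul_block_of_lt {i j : Fin n} (h : i < j) (p : ℕ × Bool) :
    X K q n j * block q i p = q ^ p.1 • (block q i p * X K q n j) := by
  rcases p with ⟨a, _ | _⟩
  · rw [block_false, X_mul_X_pow_of_lt h]
  · rw [block_true, ← mul_assoc, X_mul_X_pow_of_lt h, smul_mul_assoc, mul_assoc,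
      ← Y_mul_X_of_lt h, mul_assoc]

theorem Y_mul_block_true_self (i : Fin n) (a : ℕ) : Y K q n i * block q i (a, true) = 0 := by
  rw [block_true, ← mul_assoc, Y_mul_X_pow_self, smul_mul_assoc, mul_assoc, Y_mul_Y_self,
    mul_zero, smul_zero]

theorem Y_mul_block_false_self (i : Fin n) (a : ℕ) :
    Y K q n i * block q i (a, false) = q ^ a • block q i (a, true) := by
  rw [block_false, block_true, Y_mul_X_pow_self]

theorem Y_mul_block_true_of_gt {i j : Fin n} (h : i < j) (a : ℕ) :
    Y K q n j * block q i (a, true) = (-q⁻¹) • (block q i (a, true) * Y K q n j) := by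
  have hvanish : Y K q n i * X K q n j * Y K q n i = 0 := by
    rw [Y_mul_X_of_lt h, mul_assoc, Y_mul_Y_self, mul_zero]
  rw [block_true, ← mul_assoc, Y_mul_X_pow_of_gt h, add_mul, smul_mul_assoc,
    mul_assoc _ (_ * _), hvanish, mul_zero, smul_zero, add_zero, mul_assoc, Y_mul_Y_of_lt h,
    mul_smul_comm, mul_assoc]

theorem Y_mul_block_false_of_gt {i j : Fin n} (h : i < j) (a : ℕ) :
    Y K q n j * block q i (a, false) = block q i (a, false) * Y K q n j +
      ((q - q⁻¹) * qInt q a) • (block q i (a - 1, true) * X K q n j) := by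
  rw [block_false, block_true, Y_mul_X_pow_of_gt h, mul_assoc]

/-- The bidegree of `xᵃ yᵇ`: its exterior degree, then its total degree. -/
def bidegree (p : ℕ × Bool) : ℕ × ℕ := (p.2.toNat, p.1 + p.2.toNat)

/-- The product of the blocks with exponents `m` over the indices in `l`, in the order of `l`. -/
noncomputable def monomialOn (q : K) (l : List (Fin n)) (m : Fin n → ℕ × Bool) :
    OmegaAlg K q n :=
  (l.map fun i => block q i (m i)).prod

theorem monomialOn_nil (m : Fin n → ℕ × Bool) : monomialOn q [] m = 1 := rfl

theorem monomialOn_cons (i : Fin n) (l : List (Fin n)) (m : Fin n → ℕ × Bool) :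
    monomialOn q (i :: l) m = block q i (m i) * monomialOn q l m := by
  simp [monomialOn]

/-- The span of the monomials over `l` of bidegree `b`. -/
noncomputable def monomialSpan (q : K) (l : List (Fin n)) (b : ℕ × ℕ) :
    Submodule K (OmegaAlg K q n) :=
  Submodule.span K (monomialOn q l '' {m | (l.map fun i => bidegree (m i)).sum = b})

theorem monomialOn_mem_monomialSpan (l : List (Fin n)) (m : Fin n → ℕ × Bool) :
    monomialOn q l m ∈ monomialSpan q l (l.map fun i => bidegree (m i)).sum :=
  Submodule.subset_span (Set.mem_image_of_mem _ rfl)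

theorem mul_mem_of_mem_monomialSpan {l : List (Fin n)} {b : ℕ × ℕ} {a z : OmegaAlg K q n}
    {N : Submodule K (OmegaAlg K q n)} (hz : z ∈ monomialSpan q l b)
    (h : ∀ m, (l.map fun i => bidegree (m i)).sum = b → a * monomialOn q l m ∈ N) :
    a * z ∈ N := by
  have hle : (monomialSpan q l b).map (LinearMap.mulLeft K a) ≤ N := by
    rw [monomialSpan, Submodule.map_span_le]
    rintro _ ⟨m, hm, rfl⟩
    exact h m hm
  exact hle (Submodule.mem_map_of_mem hz)

theorem block_mul_mem_monomialSpan {i : Fin n} {l : List (Fin n)} (hi : i ∉ l) (p : ℕ × Bool)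
    {b : ℕ × ℕ} {z : OmegaAlg K q n} (hz : z ∈ monomialSpan q l b) :
    block q i p * z ∈ monomialSpan q (i :: l) (bidegree p + b) := by
  refine mul_mem_of_mem_monomialSpan hz fun m hm => ?_
  have hupdate : ∀ j ∈ l, Function.update m i p j = m j := fun j hj =>
    Function.update_of_ne (ne_of_mem_of_not_mem hj hi) _ _
  refine Submodule.subset_span ⟨Function.update m i p, ?_, ?_⟩
  · rw [Set.mem_ofPred_eq, List.map_cons, List.sum_cons, Function.update_self, ← hm,
      List.map_congr_left fun j hj => congrArg bidegree (hupdate j hj)]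
  · rw [monomialOn_cons, Function.update_self, monomialOn, monomialOn,
      List.map_congr_left fun j hj => congrArg (block q j) (hupdate j hj)]

theorem X_mul_mem_monomialSpan {l : List (Fin n)} (hl : l.Pairwise (· < ·)) {j : Fin n}
    (hj : j ∈ l) {b : ℕ × ℕ} {z : OmegaAlg K q n} (hz : z ∈ monomialSpan q l b) :
    X K q n j * z ∈ monomialSpan q l (b + (0, 1)) := by
  induction l generalizing b z with
  | nil => exact absurd hj List.not_mem_nil
  | cons i l ih =>
    obtain ⟨hil, hl⟩ := List.pairwise_cons.1 hl
    have hi : i ∉ l := fun h => lt_irrefl _ (hil i h)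
    refine mul_mem_of_mem_monomialSpan hz fun m hm => ?_
    have htail := monomialOn_mem_monomialSpan (q := q) l m
    rw [List.map_cons, List.sum_cons] at hm
    rw [monomialOn_cons, ← mul_assoc, ← hm]
    rcases List.mem_cons.1 hj with rfl | hj
    · have hdeg : bidegree (m j) + (0, 1) = bidegree ((m j).1 + 1, (m j).2) := by
        ext <;> simp [bidegree, add_right_comm]
      rw [X_mul_block_self, add_right_comm, hdeg]
      exact block_mul_mem_monomialSpan hi _ htail
    · rw [X_mul_block_of_lt (hil j hj), smul_mul_assoc, mul_assoc, add_assoc]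
      exact Submodule.smul_mem _ _ (block_mul_mem_monomialSpan hi _ (ih hl hj htail))

theorem Y_mul_mem_monomialSpan {l : List (Fin n)} (hl : l.Pairwise (· < ·)) {j : Fin n}
    (hj : j ∈ l) {b : ℕ × ℕ} {z : OmegaAlg K q n} (hz : z ∈ monomialSpan q l b) :
    Y K q n j * z ∈ monomialSpan q l (b + (1, 1)) := by
  induction l generalizing b z with
  | nil => exact absurd hj List.not_mem_nil
  | cons i l ih =>
    obtain ⟨hil, hl⟩ := List.pairwise_cons.1 hl
    have hi : i ∉ l := fun h => lt_irrefl _ (hil i h)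
    refine mul_mem_of_mem_monomialSpan hz fun m hm => ?_
    have htail := monomialOn_mem_monomialSpan (q := q) l m
    rw [List.map_cons, List.sum_cons] at hm
    rw [monomialOn_cons, ← mul_assoc, ← hm]
    rcases List.mem_cons.1 hj with rfl | hj
    · rcases m j with ⟨a, _ | _⟩
      · rw [Y_mul_block_false_self, smul_mul_assoc, add_right_comm]
        exact Submodule.smul_mem _ _ (block_mul_mem_monomialSpan hi (a, true) htail)
      · rw [Y_mul_block_true_self, zero_mul]
        exact zero_mem _
    · rcases m i with ⟨a, _ | _⟩
      · rw [Y_mul_block_false_of_gt (hil j hj), add_mul, smul_mul_assoc, mul_assoc, mul_assoc,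
          add_assoc]
        refine add_mem (block_mul_mem_monomialSpan hi _ (ih hl hj htail)) ?_
        rcases a with _ | a
        · simp [qInt_zero]
        rw [add_comm _ ((1 : ℕ), (1 : ℕ)), ← add_assoc]
        have hdeg : bidegree (a + 1, false) + (1, 1) = bidegree (a, true) + (0, 1) := rfl
        rw [hdeg, add_assoc, add_comm ((0 : ℕ), (1 : ℕ)), Nat.add_sub_cancel]
        exact Submodule.smul_mem _ _
          (block_mul_mem_monomialSpan hi _ (X_mul_mem_monomialSpan hl hj htail))
      · rw [Y_mul_block_true_of_gt (hil j hj), smul_mul_assoc, mul_assoc, add_assoc]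
        exact Submodule.smul_mem _ _ (block_mul_mem_monomialSpan hi _ (ih hl hj htail))

/-- The ordered monomial `x₁^a₁ y₁^b₁ ⋯ xₙ^aₙ yₙ^bₙ`. -/
noncomputable def monomial (q : K) (m : Fin n → ℕ × Bool) : OmegaAlg K q n :=
  monomialOn q (List.finRange n) m

theorem wordProd_mem_monomialSpan (w : List (OmegaLetter n)) :
    wordProd K q n w ∈ monomialSpan q (List.finRange n) (countY n w, w.length) := by
  induction w with
  | nil =>
    refine Submodule.subset_span ⟨fun _ => (0, false), ?_, ?_⟩
    · simp [bidegree, countY]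
    · simp [monomialOn, block_false, wordProd]
  | cons g w ih =>
    have hfin := List.pairwise_lt_finRange n
    rw [wordProd_cons]
    rcases g with i | i
    · have hdeg : (countY n (Sum.inl i :: w), w.length + 1) = (countY n w, w.length) + (0, 1) := by
        simp [countY]
      rw [List.length_cons, hdeg]
      exact X_mul_mem_monomialSpan hfin (List.mem_finRange i) ih
    · have hdeg : (countY n (Sum.inr i :: w), w.length + 1) = (countY n w, w.length) + (1, 1) := by
        simp [countY, List.filter_cons]
      rw [List.length_cons, hdeg]
      exact Y_mul_mem_monomialSpan hfin (List.mem_finRange i) ih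

theorem span_range_monomial : Submodule.span K (Set.range (monomial q (n := n))) = ⊤ := by
  rw [eq_top_iff, ← span_range_wordProd, Submodule.span_le]
  rintro _ ⟨w, rfl⟩
  exact Submodule.span_mono (Set.image_subset_range _ _) (wordProd_mem_monomialSpan w)

theorem block_mem_piece (i : Fin n) (p : ℕ × Bool) :
    block q i p ∈ piece K q n (bidegree p).1 (bidegree p).2 := by
  let A := fun b : ℕ × ℕ => piece K q n b.1 b.2
  have hX := SetLike.pow_mem_graded (A := A) (i := (0, 1)) p.1 (X_mem_piece i)
  have hY : Y K q n i ∈ A (1, 1) := Y_mem_piece i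
  rcases p with ⟨a, _ | _⟩
  · rw [block_false]
    simpa [A, bidegree] using hX
  · rw [block_true]
    simpa [A, bidegree] using SetLike.mul_mem_graded (A := A) hX hY

theorem piece_eq_span_monomial (r d : ℕ) : piece K q n r d =
    Submodule.span K (monomial q '' {m | ∑ i, bidegree (m i) = (r, d)}) := by
  refine le_antisymm (Submodule.span_le.2 ?_) (Submodule.span_le.2 ?_)
  · rintro _ ⟨w, rfl, rfl, rfl⟩
    have hw := wordProd_mem_monomialSpan (q := q) w
    simp only [monomialSpan, ← Fin.sum_univ_def] at hw
    exact hw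
  · rintro _ ⟨m, hm, rfl⟩
    let A := fun b : ℕ × ℕ => piece K q n b.1 b.2
    have hblock : ∀ i ∈ List.finRange n, block q i (m i) ∈ A (bidegree (m i)) :=
      fun i _ => block_mem_piece i (m i)
    have hmem := SetLike.list_prod_map_mem_graded (A := A) _ _ _ hblock
    rw [← Fin.sum_univ_def, hm] at hmem
    exact hmem

end Monomials

section Weights

/-- The tail sum `wᵢ + ⋯ + wₙ` of a weight, whose quantum integer is a coordinate of `theta`. -/
def tailSum (w : Fin n → ℕ) (i : Fin n) : ℕ := ∑ k ∈ Finset.Ici i, w k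

theorem tailSum_add_single (w : Fin n → ℕ) (i j : Fin n) :
    tailSum (w + Pi.single j 1) i = tailSum w i + if i ≤ j then 1 else 0 := by
  simp [tailSum, Finset.sum_add_distrib, Pi.single_apply, Finset.sum_ite_eq']

theorem tailSum_eq_sum {w : Fin n → ℕ} {i : Fin n} (h : ∀ k < i, w k = 0) :
    tailSum w i = ∑ k, w k :=
  Finset.sum_subset (Finset.subset_univ _) fun k _ hk =>
    h k (not_le.1 fun hik => hk (Finset.mem_Ici.2 hik))

theorem forall_dvd_tailSum_iff {ℓ : ℕ} {w : Fin n → ℕ} :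
    (∀ i, ℓ ∣ tailSum w i) ↔ ∀ i, ℓ ∣ w i := by
  refine ⟨fun h i => ?_, fun h i => Finset.dvd_sum fun k _ => h k⟩
  induction i using WellFoundedGT.induction with
  | ind i ih =>
    have hsum : tailSum w i = w i + ∑ k ∈ Finset.Ioi i, w k := by
      rw [tailSum, Finset.Ici_eq_cons_Ioi, Finset.sum_cons]
    have htail : ℓ ∣ ∑ k ∈ Finset.Ioi i, w k :=
      Finset.dvd_sum fun k hk => ih k (Finset.mem_Ioi.1 hk)
    exact (Nat.dvd_add_left htail).1 (hsum ▸ h i)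

/-- The covector by which `δ` acts, through the wedge product, on the space of weight `w`. -/
def theta (q : K) (w : Fin n → ℕ) : Fin n → K := fun i => qInt q (tailSum w i)

/-- The increment of `theta` under multiplication by `xⱼ`; the generator `yⱼ` acts by wedging
with it. -/
def sigma (q : K) (w : Fin n → ℕ) (j : Fin n) : Fin n → K :=
  fun i => if i ≤ j then (q ^ 2) ^ tailSum w i else 0

theorem theta_add_single (w : Fin n → ℕ) (j : Fin n) :
    theta q (w + Pi.single j 1) = theta q w + sigma q w j := by
  funext i
  by_cases h : i ≤ j <;> simp [theta, sigma, tailSum_add_single, h, qInt_succ]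

theorem sigma_add_single_of_le {j k : Fin n} (h : j ≤ k) (w : Fin n → ℕ) :
    sigma q (w + Pi.single k 1) j = q ^ 2 • sigma q w j := by
  funext i
  by_cases hi : i ≤ j
  · simp [sigma, tailSum_add_single, hi, hi.trans h, pow_succ']
  · simp [sigma, hi]

theorem sigma_add_single_of_lt {j k : Fin n} (h : k < j) (w : Fin n → ℕ) :
    sigma q (w + Pi.single k 1) j = sigma q w j + (q ^ 2 - 1) • sigma q w k := by
  funext i
  by_cases hi : i ≤ k
  · simp [sigma, tailSum_add_single, hi, hi.trans h.le, pow_succ', sub_mul]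
  · simp [sigma, tailSum_add_single, hi]

/-- The basis vectors `(1, …, 1, 0, …, 0)` of `Kⁿ`, the last `1` being in position `j`. -/
def flagVector (K : Type*) [Field K] (j : Fin n) : Fin n → K := fun i => if i ≤ j then 1 else 0

theorem sigma_eq_smul_flagVector {w : Fin n → ℕ} {j : Fin n} (h : ∀ k < j, w k = 0) :
    sigma q w j = (q ^ 2) ^ (∑ k, w k) • flagVector K j := by
  funext i
  by_cases hi : i ≤ j
  · simp [sigma, flagVector, hi, tailSum_eq_sum fun k hk => h k (hk.trans_le hi)]
  · simp [sigma, flagVector, hi]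

theorem linearIndependent_flagVector :
    LinearIndependent K (flagVector K : Fin n → Fin n → K) := by
  have htri : (Matrix.of (flagVector K : Fin n → Fin n → K)).IsLowerTriangular :=
    fun i j hij => if_neg (not_le.2 hij)
  have hdet : (Matrix.of (flagVector K : Fin n → Fin n → K)).det = 1 := by
    simp [Matrix.det_of_isLowerTriangular _ htri, flagVector]
  refine Matrix.linearIndependent_rows_iff_isUnit.2 ((Matrix.isUnit_iff_isUnit_det _).2 ?_)
  exact IsUnit.of_mul_eq_one 1 ((mul_one _).trans hdet)

/-- The basis of `Kⁿ` formed by the vectors `flagVector K j`. -/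
noncomputable def flagBasis (K : Type*) [Field K] (n : ℕ) : Module.Basis (Fin n) K (Fin n → K) :=
  basisOfLinearIndependentOfCardEqFinrank' (flagVector K) linearIndependent_flagVector (by simp)

theorem flagBasis_apply (j : Fin n) : flagBasis K n j = flagVector K j := by
  simp [flagBasis]

end Weights

section ExteriorMonomials

/-- The exterior algebra modelling each weight space of `Ω(n)`. -/
abbrev Exterior (K : Type*) [Field K] (n : ℕ) := ExteriorAlgebra K (Fin n → K)

/-- The automorphism of the exterior algebra multiplying vectors by `c`. -/
noncomputable def scale (c : K) : Exterior K n →ₐ[K] Exterior K n :=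
  ExteriorAlgebra.map (c • LinearMap.id)

theorem scale_ι (c : K) (v : Fin n → K) :
    scale c (ExteriorAlgebra.ι K v) = c • ExteriorAlgebra.ι K v := by
  simp [scale]

theorem scale_scale (c d : K) (ω : Exterior K n) : scale c (scale d ω) = scale (c * d) ω := by
  rw [scale, scale, scale, ← AlgHom.comp_apply, ExteriorAlgebra.map_comp_map,
    LinearMap.smul_comp, LinearMap.comp_smul, LinearMap.id_comp, smul_smul]

theorem scale_one (ω : Exterior K n) : scale (1 : K) ω = ω := by
  rw [scale, one_smul, ExteriorAlgebra.map_id, AlgHom.id_apply]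

/-- The product of the flag vectors with indices in the list `s`. -/
noncomputable def wedge (K : Type*) [Field K] (s : List (Fin n)) : Exterior K n :=
  (s.map fun j => ExteriorAlgebra.ι K (flagVector K j)).prod

theorem wedge_cons (j : Fin n) (s : List (Fin n)) :
    wedge K (j :: s) = ExteriorAlgebra.ι K (flagVector K j) * wedge K s := by
  simp [wedge]

theorem scale_wedge (c : K) (s : List (Fin n)) :
    scale c (wedge K s) = c ^ s.length • wedge K s := by
  induction s with
  | nil => simp [wedge]
  | cons j s ih =>
    rw [wedge_cons, map_mul, scale_ι, ih, smul_mul_smul_comm, List.length_cons, pow_succ']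

theorem flagBasis_exteriorAlgebra_apply (s : Finset (Fin n)) :
    (flagBasis K n).ExteriorAlgebra s = wedge K (s.sort (· ≤ ·)) := by
  rw [ExteriorAlgebra.basis_apply_ofCard _ rfl, ExteriorAlgebra.ιMulti_family,
    ExteriorAlgebra.ιMulti_apply, Set.powersetCard.ofFinEmbEquiv_symm_apply, List.ofFn_eq_map,
    wedge, ← Finset.listMap_orderEmbOfFin_finRange s rfl, List.map_map]
  simp only [Function.comp_def, flagBasis_apply]
  rfl

/-- Contraction of the exterior algebra by a linear form. -/
noncomputable def contract (d : Module.Dual K (Fin n → K)) : Exterior K n →ₗ[K] Exterior K n :=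
  CliffordAlgebra.contractLeft d

theorem contract_ι_mul (d : Module.Dual K (Fin n → K)) (v : Fin n → K) (ω : Exterior K n) :
    contract d (ExteriorAlgebra.ι K v * ω) =
      d v • ω - ExteriorAlgebra.ι K v * contract d ω :=
  CliffordAlgebra.contractLeft_ι_mul _ _ _

theorem contract_wedge_mem_span (d : Module.Dual K (Fin n → K)) (s : List (Fin n)) :
    contract d (wedge K s) ∈ Submodule.span K (wedge K '' {t | t.Sublist s}) := by
  induction s with
  | nil => simp [contract, wedge]
  | cons j s ih =>
    rw [wedge_cons, contract_ι_mul]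
    refine sub_mem (Submodule.smul_mem _ _ (Submodule.subset_span ?_)) ?_
    · exact ⟨s, List.sublist_cons_self j s, rfl⟩
    · have hle : (Submodule.span K (wedge K '' {t | t.Sublist s})).map
          (LinearMap.mulLeft K (ExteriorAlgebra.ι K (flagVector K j))) ≤
          Submodule.span K (wedge K '' {t | t.Sublist (j :: s)}) := by
        rw [Submodule.map_span_le]
        rintro _ ⟨t, ht, rfl⟩
        exact Submodule.subset_span ⟨j :: t, ht.cons_cons j, wedge_cons j t⟩
      exact hle (Submodule.mem_map_of_mem ih)

end ExteriorMonomials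

section Model

/-- The model of `Ω(n)`, on which `δ` preserves weights: one exterior algebra for each weight. -/
abbrev Model (K : Type*) [Field K] (n : ℕ) := (Fin n → ℕ) →₀ Exterior K n

/-- The endomorphism of the model that shifts weights by `e` and acts by `g w` in weight `w`. -/
noncomputable def weightShift (e : Fin n → ℕ) (g : (Fin n → ℕ) → Module.End K (Exterior K n)) :
    Module.End K (Model K n) :=
  Finsupp.lsum K fun w => Finsupp.lsingle (w + e) ∘ₗ g w

theorem weightShift_single (e : Fin n → ℕ) (g : (Fin n → ℕ) → Module.End K (Exterior K n))
    (w : Fin n → ℕ) (ω : Exterior K n) :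
    weightShift e g (Finsupp.single w ω) = Finsupp.single (w + e) (g w ω) := by
  simp [weightShift]

/-- The action of `xⱼ` on the model. -/
noncomputable def modelX (q : K) (j : Fin n) : Module.End K (Model K n) :=
  weightShift (Pi.single j 1) fun w => (q ^ tailSum w j)⁻¹ • LinearMap.id

/-- The action of `yⱼ` on the model. -/
noncomputable def modelY (q : K) (j : Fin n) : Module.End K (Model K n) :=
  weightShift (Pi.single j 1) fun w => (q ^ (tailSum w j + ∑ k, w k))⁻¹ •
    LinearMap.mulLeft K (ExteriorAlgebra.ι K (sigma q w j)) ∘ₗ (scale q).toLinearMap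

/-- The differential of the model: the Koszul differential of `theta q w` in weight `w`. -/
noncomputable def modelDelta (q : K) : Module.End K (Model K n) :=
  weightShift 0 fun w => LinearMap.mulLeft K (ExteriorAlgebra.ι K (theta q w))

/-- The action on the model of the automorphism `xⱼ ↦ q xⱼ`, `yⱼ ↦ yⱼ`, by which `δ` is a twisted
derivation. -/
noncomputable def modelTwist (q : K) : Module.End K (Model K n) :=
  weightShift 0 fun w => q ^ (∑ k, w k) • (scale q⁻¹).toLinearMap

theorem modelX_single (j : Fin n) (w : Fin n → ℕ) (ω : Exterior K n) :
    modelX q j (Finsupp.single w ω) =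
      (q ^ tailSum w j)⁻¹ • Finsupp.single (w + Pi.single j 1) ω := by
  simp [modelX, weightShift_single]

theorem modelY_single (j : Fin n) (w : Fin n → ℕ) (ω : Exterior K n) :
    modelY q j (Finsupp.single w ω) = (q ^ (tailSum w j + ∑ k, w k))⁻¹ •
      Finsupp.single (w + Pi.single j 1) (ExteriorAlgebra.ι K (sigma q w j) * scale q ω) := by
  simp [modelY, weightShift_single, ← Finsupp.smul_single]

theorem modelDelta_single (w : Fin n → ℕ) (ω : Exterior K n) :
    modelDelta q (Finsupp.single w ω) =
      Finsupp.single w (ExteriorAlgebra.ι K (theta q w) * ω) := by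
  simp [modelDelta, weightShift_single]

theorem modelTwist_single (w : Fin n → ℕ) (ω : Exterior K n) :
    modelTwist q (Finsupp.single w ω) = q ^ (∑ k, w k) • Finsupp.single w (scale q⁻¹ ω) := by
  simp [modelTwist, weightShift_single]

theorem sum_add_single_one (w : Fin n → ℕ) (j : Fin n) :
    ∑ k, (w + Pi.single j 1 : Fin n → ℕ) k = ∑ k, w k + 1 := by
  simp [Finset.sum_add_distrib]

theorem ι_mul_ι_mul_swap (u v : Fin n → K) (ω : Exterior K n) :
    ExteriorAlgebra.ι K u * (ExteriorAlgebra.ι K v * ω) =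
      -(ExteriorAlgebra.ι K v * (ExteriorAlgebra.ι K u * ω)) := by
  rw [← mul_assoc, ← mul_assoc, ← neg_mul,
    eq_neg_of_add_eq_zero_left (ExteriorAlgebra.ι_add_mul_swap u v)]

theorem ι_mul_ι_mul_self (v : Fin n → K) (ω : Exterior K n) :
    ExteriorAlgebra.ι K v * (ExteriorAlgebra.ι K v * ω) = 0 := by
  rw [← mul_assoc, ExteriorAlgebra.ι_sq_zero, zero_mul]

theorem modelX_mul_modelX_of_lt (hq : q ≠ 0) {i j : Fin n} (h : j < i) :
    modelX q i * modelX q j = q • (modelX q j * modelX q i) := by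
  refine Finsupp.lhom_ext fun w ω => ?_
  simp only [Module.End.mul_apply, LinearMap.smul_apply, modelX_single, map_smul, smul_smul,
    tailSum_add_single, if_neg h.not_ge, if_pos h.le, add_right_comm w (Pi.single j 1)]
  congr 1
  field_simp
  ring

theorem modelY_mul_modelX_of_lt (hq : q ≠ 0) {i j : Fin n} (h : j < i) :
    modelY q j * modelX q i = modelX q i * modelY q j := by
  refine Finsupp.lhom_ext fun w ω => ?_
  simp only [Module.End.mul_apply, modelX_single, modelY_single, map_smul, smul_smul,
    tailSum_add_single, if_neg h.not_ge, if_pos h.le, add_right_comm w (Pi.single j 1),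
    sum_add_single_one, sigma_add_single_of_le h.le, smul_mul_assoc, ← Finsupp.smul_single]
  congr 1
  field_simp
  ring

theorem modelY_mul_modelX_self (hq : q ≠ 0) (i : Fin n) :
    modelY q i * modelX q i = q • (modelX q i * modelY q i) := by
  refine Finsupp.lhom_ext fun w ω => ?_
  simp only [Module.End.mul_apply, LinearMap.smul_apply, modelX_single, modelY_single, map_smul,
    smul_smul, tailSum_add_single, le_refl, if_true, sum_add_single_one,
    sigma_add_single_of_le le_rfl, smul_mul_assoc, ← Finsupp.smul_single]
  congr 1
  field_simp
  ring

theorem modelY_mul_modelX_of_gt (hq : q ≠ 0) {i j : Fin n} (h : i < j) :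
    modelY q j * modelX q i =
      (q - q⁻¹) • (modelX q j * modelY q i) + modelX q i * modelY q j := by
  refine Finsupp.lhom_ext fun w ω => ?_
  simp only [Module.End.mul_apply, LinearMap.add_apply, LinearMap.smul_apply, modelX_single,
    modelY_single, map_smul, smul_smul, tailSum_add_single, if_neg h.not_ge, if_pos h.le,
    add_right_comm w (Pi.single j 1), sum_add_single_one, sigma_add_single_of_lt h, map_add,
    add_mul, smul_mul_assoc, ← Finsupp.smul_single, Finsupp.single_add, smul_add]
  rw [add_comm]
  congr 2 <;> field_simp <;> ring

theorem modelY_mul_modelY_of_lt (hq : q ≠ 0) {i j : Fin n} (h : j < i) :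
    modelY q i * modelY q j = (-q⁻¹) • (modelY q j * modelY q i) := by
  refine Finsupp.lhom_ext fun w ω => ?_
  simp only [Module.End.mul_apply, LinearMap.smul_apply, modelY_single, map_smul, smul_smul,
    tailSum_add_single, if_neg h.not_ge, if_pos h.le, add_right_comm w (Pi.single j 1),
    sum_add_single_one, sigma_add_single_of_lt h, sigma_add_single_of_le h.le, map_add, add_mul,
    map_mul, scale_ι, smul_mul_assoc, mul_smul_comm, ι_mul_ι_mul_self, smul_zero, add_zero,
    ι_mul_ι_mul_swap (sigma q w i), ← Finsupp.smul_single, ← neg_smul, smul_neg]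
  congr 1
  field_simp
  ring

theorem modelY_mul_modelY_self (i : Fin n) : modelY q i * modelY q i = 0 := by
  refine Finsupp.lhom_ext fun w ω => ?_
  simp only [Module.End.mul_apply, modelY_single, map_smul, sigma_add_single_of_le le_rfl, map_mul,
    scale_ι, smul_mul_assoc, mul_smul_comm, ι_mul_ι_mul_self, smul_zero, Finsupp.single_zero,
    LinearMap.zero_apply]

theorem modelTwist_mul_modelX (j : Fin n) :
    modelTwist q * modelX q j = q • (modelX q j * modelTwist q) := by
  refine Finsupp.lhom_ext fun w ω => ?_
  simp only [Module.End.mul_apply, LinearMap.smul_apply, modelX_single, modelTwist_single,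
    map_smul, smul_smul, sum_add_single_one]
  congr 1
  ring

theorem modelTwist_mul_modelY (hq : q ≠ 0) (j : Fin n) :
    modelTwist q * modelY q j = modelY q j * modelTwist q := by
  refine Finsupp.lhom_ext fun w ω => ?_
  simp only [Module.End.mul_apply, modelY_single, modelTwist_single, map_smul, smul_smul,
    sum_add_single_one, map_mul, scale_ι, scale_scale, mul_inv_cancel₀ hq, inv_mul_cancel₀ hq,
    smul_mul_assoc, ← Finsupp.smul_single]
  congr 1
  field_simp
  ring

theorem modelDelta_mul_modelX (hq : q ≠ 0) (j : Fin n) :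
    modelDelta q * modelX q j = modelY q j * modelTwist q + modelX q j * modelDelta q := by
  refine Finsupp.lhom_ext fun w ω => ?_
  have hcoeff : q ^ (∑ k, w k) * (q ^ (tailSum w j + ∑ k, w k))⁻¹ = (q ^ tailSum w j)⁻¹ := by
    field_simp
    ring
  simp only [Module.End.mul_apply, LinearMap.add_apply, modelX_single, modelY_single,
    modelDelta_single, modelTwist_single, map_smul, smul_smul, theta_add_single, map_add, add_mul,
    scale_scale, mul_inv_cancel₀ hq, scale_one, hcoeff, Finsupp.single_add, smul_add]
  rw [add_comm]

theorem modelDelta_mul_modelY (hq : q ≠ 0) (j : Fin n) :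
    modelDelta q * modelY q j = (-q⁻¹) • (modelY q j * modelDelta q) := by
  refine Finsupp.lhom_ext fun w ω => ?_
  simp only [Module.End.mul_apply, LinearMap.smul_apply, modelY_single, modelDelta_single,
    map_smul, smul_smul, theta_add_single, map_add, add_mul, map_mul, scale_ι, smul_mul_assoc,
    mul_smul_comm, ι_mul_ι_mul_self, add_zero, ι_mul_ι_mul_swap (theta q w), smul_neg,
    Finsupp.single_neg, ← Finsupp.smul_single, ← neg_smul]
  congr 1
  field_simp

/-- The action of `Ω(n)` on the model. -/
noncomputable def modelRep (hq : q ≠ 0) : OmegaAlg K q n →ₐ[K] Module.End K (Model K n) :=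
  RingQuot.liftAlgHom K ⟨FreeAlgebra.lift K (Sum.elim (modelX q) (modelY q)), fun a b h => by
    induction h <;>
      simp only [map_mul, map_smul, map_add, map_zero, FreeAlgebra.lift_ι_apply, Sum.elim_inl,
        Sum.elim_inr]
    case xx h => exact modelX_mul_modelX_of_lt hq h
    case yx_gt h => exact modelY_mul_modelX_of_lt hq h
    case yx_eq i => exact modelY_mul_modelX_self hq i
    case yx_lt h => exact modelY_mul_modelX_of_gt hq h
    case yy h => exact modelY_mul_modelY_of_lt hq h
    case ysq i => exact modelY_mul_modelY_self i⟩

theorem modelRep_X (hq : q ≠ 0) (i : Fin n) : modelRep hq (X K q n i) = modelX q i := by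
  rw [modelRep, X, gen, RingQuot.liftAlgHom_mkAlgHom_apply, FreeAlgebra.lift_ι_apply,
    Sum.elim_inl]

theorem modelRep_Y (hq : q ≠ 0) (i : Fin n) : modelRep hq (Y K q n i) = modelY q i := by
  rw [modelRep, Y, gen, RingQuot.liftAlgHom_mkAlgHom_apply, FreeAlgebra.lift_ι_apply,
    Sum.elim_inr]

end Model

section DeRham

variable {δ : OmegaAlg K q n →ₗ[K] OmegaAlg K q n}

theorem IsDeRham.apply_one (hδ : IsDeRham K q n δ) : δ 1 = 0 := hδ []

theorem IsDeRham.apply_X_mul_wordProd (hδ : IsDeRham K q n δ) (i : Fin n)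
    (w : List (OmegaLetter n)) : δ (X K q n i * wordProd K q n w) =
      q ^ countX n w • (Y K q n i * wordProd K q n w) + X K q n i * δ (wordProd K q n w) := by
  rw [X, ← wordProd_cons, hδ (Sum.inl i :: w), hδ w]
  refine (Fin.sum_univ_succ (n := w.length) _).trans (congrArg₂ _ ?_ ?_)
  · simp [countY, wordProd_cons, Y]
  · rw [Finset.mul_sum]
    refine Finset.sum_congr rfl fun k _ => ?_
    rw [show (Sum.inl i :: w).get k.succ = w.get k from rfl]
    rcases w.get k with a | a <;> simp [countY, wordProd_cons]

theorem IsDeRham.apply_Y_mul_wordProd (hδ : IsDeRham K q n δ) (i : Fin n)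
    (w : List (OmegaLetter n)) : δ (Y K q n i * wordProd K q n w) =
      (-q⁻¹) • (Y K q n i * δ (wordProd K q n w)) := by
  rw [Y, ← wordProd_cons, hδ (Sum.inr i :: w), hδ w, Finset.mul_sum, Finset.smul_sum]
  generalize -q⁻¹ = c
  refine (Fin.sum_univ_succ (n := w.length) _).trans ((zero_add _).trans ?_)
  refine Finset.sum_congr rfl fun k _ => ?_
  rw [show (Sum.inr i :: w).get k.succ = w.get k from rfl]
  rcases w.get k with a | a
  · simp [countY, wordProd_cons, smul_smul, List.filter_cons, pow_succ', mul_assoc]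
  · simp

/-- The image of `z` in the model: the result of letting `z` act on the vacuum vector. -/
noncomputable def toModel (hq : q ≠ 0) : OmegaAlg K q n →ₗ[K] Model K n :=
  LinearMap.applyₗ (Finsupp.single 0 1) ∘ₗ (modelRep hq).toLinearMap

theorem toModel_apply (hq : q ≠ 0) (z : OmegaAlg K q n) :
    toModel hq z = modelRep hq z (Finsupp.single 0 1) := rfl

theorem toModel_one (hq : q ≠ 0) :
    toModel hq (1 : OmegaAlg K q n) = Finsupp.single 0 1 := by
  rw [toModel_apply, map_one, Module.End.one_apply]

theorem toModel_mul (hq : q ≠ 0) (y z : OmegaAlg K q n) :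
    toModel hq (y * z) = modelRep hq y (toModel hq z) := by
  rw [toModel_apply, toModel_apply, map_mul, Module.End.mul_apply]

theorem modelTwist_toModel_wordProd (hq : q ≠ 0) (w : List (OmegaLetter n)) :
    modelTwist q (toModel hq (wordProd K q n w)) =
      q ^ countX n w • toModel hq (wordProd K q n w) := by
  induction w with
  | nil =>
    change modelTwist q (toModel hq 1) = q ^ 0 • toModel hq 1
    simp [toModel_one, modelTwist_single]
  | cons g w ih =>
    rw [wordProd_cons, toModel_mul]
    rcases g with i | i
    · rw [← X, modelRep_X, ← Module.End.mul_apply, modelTwist_mul_modelX, LinearMap.smul_apply,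
        Module.End.mul_apply, ih, map_smul, smul_smul, ← pow_succ']
      rfl
    · rw [← Y, modelRep_Y, ← Module.End.mul_apply, modelTwist_mul_modelY hq,
        Module.End.mul_apply, ih, map_smul]
      rfl

theorem toModel_delta (hδ : IsDeRham K q n δ) (hq : q ≠ 0) (z : OmegaAlg K q n) :
    toModel hq (δ z) = modelDelta q (toModel hq z) := by
  suffices h : toModel hq ∘ₗ δ = modelDelta q ∘ₗ toModel hq from LinearMap.congr_fun h z
  refine LinearMap.ext_on_range span_range_wordProd fun w => ?_
  induction w with
  | nil =>
    change toModel hq (δ 1) = modelDelta q (toModel hq 1)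
    have htheta : theta q (0 : Fin n → ℕ) = 0 := funext fun i => by
      simp [theta, tailSum, qInt_zero]
    simp [hδ.apply_one, toModel_one, modelDelta_single, htheta]
  | cons g w ih =>
    rw [LinearMap.comp_apply, LinearMap.comp_apply] at ih ⊢
    rw [wordProd_cons]
    rcases g with i | i
    · rw [← X, hδ.apply_X_mul_wordProd, map_add, map_smul, toModel_mul, toModel_mul, toModel_mul,
        ih, modelRep_X, modelRep_Y, ← Module.End.mul_apply (modelDelta q),
        modelDelta_mul_modelX hq, LinearMap.add_apply, Module.End.mul_apply,
        modelTwist_toModel_wordProd, map_smul, Module.End.mul_apply]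
    · rw [← Y, hδ.apply_Y_mul_wordProd, map_smul, toModel_mul, toModel_mul, ih, modelRep_Y,
        ← Module.End.mul_apply (modelDelta q), modelDelta_mul_modelY hq, LinearMap.smul_apply,
        Module.End.mul_apply]

end DeRham

section Independence

/-- The weight of a monomial: its total degree in each pair of variables `xᵢ, yᵢ`. -/
def weight (m : Fin n → ℕ × Bool) : Fin n → ℕ := fun i => (bidegree (m i)).2

theorem modelX_pow_single (hq : q ≠ 0) (j : Fin n) (a : ℕ) (w : Fin n → ℕ) (ω : Exterior K n) :
    ∃ u : K, u ≠ 0 ∧ (modelX q j ^ a) (Finsupp.single w ω) =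
      u • Finsupp.single (w + Pi.single j a) ω := by
  induction a with
  | zero => exact ⟨1, one_ne_zero, by simp⟩
  | succ a ih =>
    obtain ⟨u, hu, ih⟩ := ih
    refine ⟨u * (q ^ tailSum (w + Pi.single j a) j)⁻¹, ?_, ?_⟩
    · exact mul_ne_zero hu (inv_ne_zero (pow_ne_zero _ hq))
    · rw [pow_succ', Module.End.mul_apply, ih, map_smul, modelX_single, smul_smul, add_assoc,
        ← Pi.single_add]

theorem modelRep_block_single (hq : q ≠ 0) {i : Fin n} {w : Fin n → ℕ} (hw : ∀ k < i, w k = 0)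
    (p : ℕ × Bool) (s : List (Fin n)) : ∃ u : K, u ≠ 0 ∧
      modelRep hq (block q i p) (Finsupp.single w (wedge K s)) =
        u • Finsupp.single (w + Pi.single i (bidegree p).2)
          (wedge K (if p.2 then i :: s else s)) := by
  rcases p with ⟨a, _ | _⟩
  · obtain ⟨u, hu, h⟩ := modelX_pow_single hq i a w (wedge K s)
    exact ⟨u, hu, by simpa [block_false, modelRep_X, bidegree] using h⟩
  · obtain ⟨u, hu, h⟩ := modelX_pow_single hq i a (w + Pi.single i 1) (wedge K (i :: s))
    refine ⟨(q ^ (tailSum w i + ∑ k, w k))⁻¹ * ((q ^ 2) ^ (∑ k, w k) * (q ^ s.length * u)), ?_, ?_⟩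
    · simp [hq, hu]
    · rw [block_true, map_mul, map_pow, modelRep_X, modelRep_Y, Module.End.mul_apply,
        modelY_single, sigma_eq_smul_flagVector hw, map_smul (ExteriorAlgebra.ι K), scale_wedge,
        smul_mul_smul_comm, ← wedge_cons, ← Finsupp.smul_single, map_smul, map_smul, h,
        smul_smul, smul_smul, add_assoc, ← Pi.single_add, mul_assoc]
      simp [bidegree, add_comm, mul_assoc]

theorem toModel_monomialOn (hq : q ≠ 0) {l : List (Fin n)} (hl : l.Pairwise (· < ·))
    (m : Fin n → ℕ × Bool) : ∃ u : K, u ≠ 0 ∧ toModel hq (monomialOn q l m) =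
      u • Finsupp.single (l.map fun i => Pi.single i (weight m i)).sum
        (wedge K (l.filter fun i => (m i).2)) := by
  induction l with
  | nil => exact ⟨1, one_ne_zero, by simp [monomialOn_nil, toModel_one, wedge]⟩
  | cons i l ih =>
    obtain ⟨hil, hl⟩ := List.pairwise_cons.1 hl
    obtain ⟨u, hu, ih⟩ := ih hl
    have hw : ∀ k < i, (l.map fun j => Pi.single j (weight m j)).sum k = 0 := fun k hk => by
      rw [Pi.list_sum_apply, List.map_map]
      refine List.sum_eq_zero fun c hc => ?_
      obtain ⟨j, hj, rfl⟩ := List.mem_map.1 hc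
      exact Pi.single_eq_of_ne (hk.trans (hil j hj)).ne _
    obtain ⟨v, hv, h⟩ := modelRep_block_single hq hw (m i) (l.filter fun i => (m i).2)
    refine ⟨u * v, mul_ne_zero hu hv, ?_⟩
    rw [monomialOn_cons, toModel_mul, ih, map_smul, h, smul_smul, List.map_cons, List.sum_cons,
      List.filter_cons, add_comm (Pi.single i _), weight]

theorem toModel_monomial (hq : q ≠ 0) (m : Fin n → ℕ × Bool) :
    ∃ u : K, u ≠ 0 ∧ toModel hq (monomial q m) =
      u • Finsupp.single (weight m) (wedge K ((List.finRange n).filter fun i => (m i).2)) := by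
  obtain ⟨u, hu, h⟩ := toModel_monomialOn hq (List.pairwise_lt_finRange n) m
  rw [← Fin.sum_univ_def, Finset.univ_sum_single] at h
  exact ⟨u, hu, h⟩

theorem linearIndependent_toModel_monomial (hq : q ≠ 0) :
    LinearIndependent K (toModel hq ∘ monomial q (n := n)) := by
  choose u hu h using toModel_monomial (K := K) (q := q) (n := n) hq
  let oddSet (m : Fin n → ℕ × Bool) : Finset (Fin n) :=
    ((List.finRange n).filter fun i => (m i).2).toFinset
  have hodd (m : Fin n → ℕ × Bool) :
      (oddSet m).sort (· ≤ ·) = (List.finRange n).filter fun i => (m i).2 :=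
    (List.toFinset_sort _ ((List.nodup_finRange n).filter _)).2
      ((List.pairwise_le_finRange n).filter _)
  have hinj : Function.Injective fun m : Fin n → ℕ × Bool =>
      (⟨weight m, oddSet m⟩ : Σ _ : Fin n → ℕ, Finset (Fin n)) := by
    intro m m' hm
    obtain ⟨hw, hs⟩ := Sigma.mk.inj hm
    have hs := Finset.ext_iff.1 (eq_of_heq hs)
    funext i
    have hflag : (m i).2 = (m' i).2 := Bool.eq_iff_iff.2 (by simpa [oddSet] using hs i)
    have hdeg : (m i).1 + (m i).2.toNat = (m' i).1 + (m' i).2.toNat := congrFun hw i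
    exact Prod.ext (Nat.add_right_cancel (hflag ▸ hdeg)) hflag
  have hbasis := (Finsupp.basis fun _ : Fin n → ℕ =>
    (flagBasis K n).ExteriorAlgebra).linearIndependent.comp _ hinj
  refine (funext fun m => ?_ : toModel hq ∘ monomial q = _) ▸
    hbasis.units_smul fun m => Units.mk0 (u m) (hu m)
  simp [h, flagBasis_exteriorAlgebra_apply, hodd, Units.smul_def]

theorem linearIndependent_monomial (hq : q ≠ 0) :
    LinearIndependent K (monomial q (n := n)) :=
  (linearIndependent_toModel_monomial hq).of_comp _

theorem toModel_injective (hq : q ≠ 0) :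
    Function.Injective (toModel hq : OmegaAlg K q n →ₗ[K] Model K n) := by
  have hdisj := Submodule.range_ker_disjoint (linearIndependent_toModel_monomial (n := n) hq)
  rw [span_range_monomial, top_disjoint] at hdisj
  exact LinearMap.ker_eq_bot.1 hdisj

end Independence

section Homotopy

theorem single_wedge_mem_range_toModel (hq : q ≠ 0) (m : Fin n → ℕ × Bool) {t : List (Fin n)}
    (ht : t.Sublist ((List.finRange n).filter fun i => (m i).2)) :
    Finsupp.single (weight m) (wedge K t) ∈ LinearMap.range (toModel (n := n) hq) := by
  let m' (i : Fin n) : ℕ × Bool :=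
    if i ∈ t then (weight m i - 1, true) else (weight m i, false)
  have hweight : weight m' = weight m := by
    funext i
    by_cases hi : i ∈ t
    · have hpos : (m i).2 = true := by simpa using ht.subset hi
      simp [weight, m', hi, bidegree, hpos]
    · simp [weight, m', hi, bidegree]
  have hfilter : ((List.finRange n).filter fun i => (m' i).2) = t := by
    have hsorted := (List.pairwise_lt_finRange n).sublist (ht.trans List.filter_sublist)
    refine List.Perm.eq_of_pairwise (fun _ _ _ _ h h' => absurd h' h.asymm)
      ((List.pairwise_lt_finRange n).filter _) hsorted
      ((List.perm_ext_iff_of_nodup ((List.nodup_finRange n).filter _) hsorted.nodup).2 fun i => ?_)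
    by_cases hi : i ∈ t <;> simp [m', hi]
  obtain ⟨u, hu, h⟩ := toModel_monomial hq m'
  rw [hweight, hfilter] at h
  exact ⟨u⁻¹ • monomial q m', by rw [map_smul, h, inv_smul_smul₀ hu]⟩

/-- The map contracting the weight space of weight `w` by the linear form `d w`; it is a
contracting homotopy for `modelDelta q` on the weights for which `d w (theta q w) = 1`. -/
noncomputable def homotopy (d : (Fin n → ℕ) → Module.Dual K (Fin n → K)) :
    Module.End K (Model K n) :=
  weightShift 0 fun w => contract (d w)

theorem homotopy_single (d : (Fin n → ℕ) → Module.Dual K (Fin n → K)) (w : Fin n → ℕ)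
    (ω : Exterior K n) :
    homotopy d (Finsupp.single w ω) = Finsupp.single w (contract (d w) ω) := by
  simp [homotopy, weightShift_single]

theorem modelDelta_homotopy_add_homotopy_modelDelta
    {d : (Fin n → ℕ) → Module.Dual K (Fin n → K)} {w : Fin n → ℕ} (hd : d w (theta q w) = 1)
    (ω : Exterior K n) :
    modelDelta q (homotopy d (Finsupp.single w ω)) +
      homotopy d (modelDelta q (Finsupp.single w ω)) = Finsupp.single w ω := by
  rw [homotopy_single, modelDelta_single, modelDelta_single, homotopy_single, contract_ι_mul, hd,
    one_smul, ← Finsupp.single_add, add_sub_cancel]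

theorem homotopy_toModel_mem_range (hq : q ≠ 0) (d : (Fin n → ℕ) → Module.Dual K (Fin n → K))
    (z : OmegaAlg K q n) : homotopy d (toModel hq z) ∈ LinearMap.range (toModel (n := n) hq) := by
  suffices h : ⊤ ≤ (LinearMap.range (toModel hq)).comap (homotopy d ∘ₗ toModel hq) from
    h (Submodule.mem_top (x := z))
  rw [← span_range_monomial, Submodule.span_le]
  rintro _ ⟨m, rfl⟩
  obtain ⟨u, -, h⟩ := toModel_monomial hq m
  rw [SetLike.mem_coe, Submodule.mem_comap, LinearMap.comp_apply, h, map_smul, homotopy_single]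
  refine Submodule.smul_mem _ _ ?_
  refine Submodule.span_le (p := (LinearMap.range (toModel hq)).comap
    (Finsupp.lsingle (weight m))) |>.2 ?_ (contract_wedge_mem_span (d (weight m)) _)
  rintro _ ⟨t, ht, rfl⟩
  exact single_wedge_mem_range_toModel hq m ht

variable {δ : OmegaAlg K q n →ₗ[K] OmegaAlg K q n}

theorem IsDeRham.mem_range_of_apply_eq_zero (hδ : IsDeRham K q n δ) (hq : q ≠ 0)
    {z : OmegaAlg K q n}
    (hz : z ∈ Submodule.span K (monomial q '' {m | theta q (weight m) ≠ 0})) (h : δ z = 0) :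
    z ∈ LinearMap.range δ := by
  have hdual (w : Fin n → ℕ) :
      ∃ d : Module.Dual K (Fin n → K), theta q w ≠ 0 → d (theta q w) = 1 := by
    by_cases hw : theta q w = 0
    · exact ⟨0, fun hw' => absurd hw hw'⟩
    · exact (Module.Projective.exists_dual_eq_one K hw).imp fun _ hd _ => hd
  choose d hd using hdual
  have hhomotopy : modelDelta q (homotopy d (toModel hq z)) +
      homotopy d (modelDelta q (toModel hq z)) = toModel hq z := by
    let Φ := (modelDelta q * homotopy d + homotopy d * modelDelta q) ∘ₗ toModel hq
    refine LinearMap.eqOn_span (f := Φ) (g := toModel hq) ?_ hz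
    rintro _ ⟨m, hm, rfl⟩
    obtain ⟨u, -, hu⟩ := toModel_monomial hq m
    rw [LinearMap.comp_apply, hu, map_smul]
    exact congrArg (u • ·) (modelDelta_homotopy_add_homotopy_modelDelta (hd _ hm) _)
  obtain ⟨y, hy⟩ := homotopy_toModel_mem_range hq d z
  refine ⟨y, toModel_injective hq ?_⟩
  rwa [← toModel_delta hδ, h, map_zero, map_zero, add_zero, ← hy, ← toModel_delta hδ] at hhomotopy

theorem IsDeRham.apply_eq_zero_of_mem_span (hδ : IsDeRham K q n δ) (hq : q ≠ 0)
    {z : OmegaAlg K q n}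
    (hz : z ∈ Submodule.span K (monomial q '' {m | theta q (weight m) = 0})) : δ z = 0 := by
  refine LinearMap.eqOn_span (g := 0) ?_ hz
  rintro _ ⟨m, hm : theta q (weight m) = 0, rfl⟩
  obtain ⟨u, -, h⟩ := toModel_monomial hq m
  refine toModel_injective hq ?_
  simp [toModel_delta hδ, h, modelDelta_single, hm]

theorem IsDeRham.eq_zero_of_mem_span_of_mem_range (hδ : IsDeRham K q n δ) (hq : q ≠ 0)
    {z : OmegaAlg K q n}
    (hz : z ∈ Submodule.span K (monomial q '' {m | theta q (weight m) = 0}))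
    (hrange : z ∈ LinearMap.range δ) : z = 0 := by
  classical
  let P : Module.End K (Model K n) := weightShift 0 fun w => if theta q w = 0 then 1 else 0
  have hP : P * modelDelta q = 0 := by
    refine Finsupp.lhom_ext fun w ω => ?_
    rw [Module.End.mul_apply, modelDelta_single, weightShift_single]
    by_cases hw : theta q w = 0 <;> simp [hw]
  have hPz : P (toModel hq z) = toModel hq z := by
    refine LinearMap.eqOn_span (f := P ∘ₗ toModel hq) (g := toModel hq) ?_ hz
    rintro _ ⟨m, hm : theta q (weight m) = 0, rfl⟩
    obtain ⟨u, -, h⟩ := toModel_monomial hq m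
    rw [LinearMap.comp_apply, h, map_smul, weightShift_single, if_pos hm, add_zero,
      Module.End.one_apply]
  obtain ⟨y, rfl⟩ := hrange
  refine toModel_injective hq ?_
  rw [map_zero, ← hPz, toModel_delta hδ, ← Module.End.mul_apply, hP, LinearMap.zero_apply]

theorem IsDeRham.exists_mem_span_sub_mem_range (hδ : IsDeRham K q n δ) (hq : q ≠ 0)
    (S : Set (Fin n → ℕ × Bool)) {z : OmegaAlg K q n}
    (hz : z ∈ Submodule.span K (monomial q '' S)) (h : δ z = 0) :
    ∃ y ∈ Submodule.span K (monomial q '' (S ∩ {m | theta q (weight m) = 0})),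
      z - y ∈ LinearMap.range δ := by
  rw [← Set.inter_union_sdiff S {m | theta q (weight m) = 0}, Set.image_union,
    Submodule.span_union] at hz
  obtain ⟨y, hy, x, hx, rfl⟩ := Submodule.mem_sup.1 hz
  refine ⟨y, hy, ?_⟩
  have hδy : δ y = 0 := hδ.apply_eq_zero_of_mem_span hq
    (Submodule.span_mono (Set.image_mono Set.inter_subset_right) hy)
  rw [map_add, hδy, zero_add] at h
  rw [add_sub_cancel_left]
  exact hδ.mem_range_of_apply_eq_zero hq
    (Submodule.span_mono (Set.image_mono fun m hm => hm.2) hx) h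

end Homotopy

section QuantumCharacteristic

variable {ℓ : ℕ}

/-- `ℓ` is the quantum characteristic of `q`: the multiples of `ℓ` are the arguments at which the
quantum integers vanish, and moreover `q ^ ℓ = 1`. This holds for primitive `ℓ`-th roots of unity
of odd order `ℓ > 1`, and for `q = 1` in characteristic `ℓ`. -/
structure IsQuantumChar (q : K) (ℓ : ℕ) : Prop where
  pos : 0 < ℓ
  pow_eq_one : q ^ ℓ = 1
  qInt_eq_zero_iff : ∀ a, qInt q a = 0 ↔ ℓ ∣ a

theorem IsQuantumChar.of_isPrimitiveRoot (hℓ : 1 < ℓ) (hodd : Odd ℓ) (hq : IsPrimitiveRoot q ℓ) :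
    IsQuantumChar q ℓ where
  pos := zero_lt_one.trans hℓ
  pow_eq_one := hq.pow_eq_one
  qInt_eq_zero_iff a := by
    have hsq : IsPrimitiveRoot (q ^ 2) ℓ := hq.pow_of_coprime 2 (Nat.coprime_two_left.2 hodd)
    have hgeom : qInt q a * (q ^ 2 - 1) = (q ^ 2) ^ a - 1 := geom_sum_mul _ _
    rw [← hsq.pow_eq_one_iff_dvd, ← sub_eq_zero (a := (q ^ 2) ^ a), ← hgeom, mul_eq_zero,
      or_iff_left (sub_ne_zero.2 (hsq.ne_one hℓ))]

variable (h : IsQuantumChar q ℓ)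
include h

theorem IsQuantumChar.ne_zero : q ≠ 0 := by
  rintro rfl
  exact zero_ne_one ((zero_pow h.pos.ne').symm.trans h.pow_eq_one)

theorem IsQuantumChar.qInt_self : qInt q ℓ = 0 := (h.qInt_eq_zero_iff ℓ).2 dvd_rfl

theorem IsQuantumChar.theta_eq_zero_iff (w : Fin n → ℕ) : theta q w = 0 ↔ ∀ i, ℓ ∣ w i := by
  rw [← forall_dvd_tailSum_iff, funext_iff]
  exact forall_congr' fun i => h.qInt_eq_zero_iff _

end QuantumCharacteristic

section CartierRelations

variable {ℓ : ℕ}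

theorem X_pow_mul_block_of_lt {i j : Fin n} (hij : i < j) (a : ℕ) (p : ℕ × Bool) :
    X K q n j ^ a * block q i p = q ^ (p.1 * a) • (block q i p * X K q n j ^ a) := by
  induction a with
  | zero => simp
  | succ a ih =>
    rw [pow_succ, mul_assoc, X_mul_block_of_lt hij, mul_smul_comm, ← mul_assoc, ih,
      smul_mul_assoc, smul_smul, mul_assoc, ← pow_succ, ← pow_add, mul_add_one, add_comm]

theorem IsQuantumChar.commute_X_X_pow (h : IsQuantumChar q ℓ) (i j : Fin n) :
    Commute (X K q n i) (X K q n j ^ ℓ) := by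
  rcases lt_trichotomy j i with hji | rfl | hij
  · rw [Commute, SemiconjBy, X_mul_X_pow_of_lt hji, h.pow_eq_one, one_smul]
  · exact Commute.self_pow _ _
  · have hblock := X_pow_mul_block_of_lt (q := q) hij ℓ (1, false)
    rw [block_false, one_mul, h.pow_eq_one, one_smul, pow_one] at hblock
    exact hblock.symm

theorem IsQuantumChar.commute_Y_X_pow (h : IsQuantumChar q ℓ) (i j : Fin n) :
    Commute (Y K q n i) (X K q n j ^ ℓ) := by
  rcases lt_trichotomy j i with hji | rfl | hij
  · rw [Commute, SemiconjBy, Y_mul_X_pow_of_gt hji, h.qInt_self, mul_zero, zero_smul, add_zero]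
  · rw [Commute, SemiconjBy, Y_mul_X_pow_self, h.pow_eq_one, one_smul]
  · exact Commute.pow_right (Y_mul_X_of_lt hij) ℓ

theorem IsQuantumChar.commute_block_X_pow (h : IsQuantumChar q ℓ) (i j : Fin n) (a : ℕ) :
    Commute (block q i (a, true)) (X K q n j ^ ℓ) := by
  rw [block_true]
  exact ((h.commute_X_X_pow i j).pow_left _).mul_left (h.commute_Y_X_pow i j)

theorem block_true_mul_self (i : Fin n) (a : ℕ) :
    block q i (a, true) * block q i (a, true) = 0 := by
  nth_rw 1 [block_true]
  rw [mul_assoc, Y_mul_block_true_self, mul_zero]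

theorem IsQuantumChar.block_mul_block_of_lt (h : IsQuantumChar q ℓ) {i j : Fin n} (hij : i < j) :
    block q j (ℓ - 1, true) * block q i (ℓ - 1, true) =
      (-1 : K) • (block q i (ℓ - 1, true) * block q j (ℓ - 1, true)) := by
  have hpow : q ^ ((ℓ - 1) * (ℓ - 1)) = q := by
    obtain ⟨k, rfl⟩ := Nat.exists_eq_add_one.2 h.pos
    rw [Nat.add_sub_cancel]
    refine mul_right_cancel₀ (pow_ne_zero k h.ne_zero) ?_
    rw [← pow_add, ← pow_succ', h.pow_eq_one, ← Nat.succ_mul, pow_mul, h.pow_eq_one, one_pow]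
  rw [block_true j, mul_assoc, Y_mul_block_true_of_gt hij, mul_smul_comm, ← mul_assoc,
    X_pow_mul_block_of_lt hij, hpow, smul_mul_assoc, smul_smul, mul_assoc, neg_mul,
    inv_mul_cancel₀ h.ne_zero]

end CartierRelations

section Cartier

variable {ℓ : ℕ}

/-- The Cartier map `xᵢ ↦ xᵢ^ℓ`, `yᵢ ↦ xᵢ^(ℓ-1) yᵢ` from the classical algebra to `Ω(n)`. -/
noncomputable def cartier (h : IsQuantumChar q ℓ) : OmegaAlg K 1 n →ₐ[K] OmegaAlg K q n :=
  RingQuot.liftAlgHom K ⟨FreeAlgebra.lift K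
    (Sum.elim (fun i => X K q n i ^ ℓ) fun i => block q i (ℓ - 1, true)), fun a b hab => by
    induction hab <;>
      simp only [map_mul, map_smul, map_zero, FreeAlgebra.lift_ι_apply, Sum.elim_inl,
        Sum.elim_inr, inv_one, sub_self, zero_smul, zero_add, one_smul]
    case xx i j _ => exact (h.commute_X_X_pow i j).pow_left ℓ
    case yx_gt i j _ => exact h.commute_block_X_pow j i _
    case yx_eq i => exact h.commute_block_X_pow i i _
    case yx_lt i j _ => exact h.commute_block_X_pow j i _
    case yy hij => exact h.block_mul_block_of_lt hij
    case ysq i => exact block_true_mul_self i _⟩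

variable (h : IsQuantumChar q ℓ)

theorem cartier_X (i : Fin n) : cartier h (X K 1 n i) = X K q n i ^ ℓ := by
  rw [cartier, X, gen, RingQuot.liftAlgHom_mkAlgHom_apply, FreeAlgebra.lift_ι_apply,
    Sum.elim_inl]

theorem cartier_Y (i : Fin n) : cartier h (Y K 1 n i) = X K q n i ^ (ℓ - 1) * Y K q n i := by
  rw [cartier, Y, gen, RingQuot.liftAlgHom_mkAlgHom_apply, FreeAlgebra.lift_ι_apply,
    Sum.elim_inr, block_true]

/-- The effect of the Cartier map on the exponents of a monomial in `xᵢ, yᵢ`. -/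
def cartierExponent (ℓ : ℕ) (p : ℕ × Bool) : ℕ × Bool :=
  (ℓ * p.1 + (ℓ - 1) * p.2.toNat, p.2)

theorem cartier_monomial (m : Fin n → ℕ × Bool) :
    cartier h (monomial 1 m) = monomial q (cartierExponent ℓ ∘ m) := by
  have hblock (i : Fin n) : cartier h (block 1 i (m i)) = block q i (cartierExponent ℓ (m i)) := by
    rcases m i with ⟨a, _ | _⟩
    · simp [block_false, cartierExponent, cartier_X, pow_mul]
    · simp [block_true, cartierExponent, cartier_X, cartier_Y, pow_mul, pow_add, mul_assoc]
  simp [monomial, monomialOn, map_list_prod, Function.comp_def, hblock]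

theorem cartierExponent_injective (hℓ : 0 < ℓ) : Function.Injective (cartierExponent ℓ) := by
  rintro ⟨a, b⟩ ⟨a', b'⟩ h
  obtain ⟨hexp, rfl : b = b'⟩ := Prod.mk.inj h
  exact Prod.ext (Nat.eq_of_mul_eq_mul_left hℓ (Nat.add_right_cancel hexp)) rfl

theorem bidegree_cartierExponent (hℓ : 0 < ℓ) (p : ℕ × Bool) :
    bidegree (cartierExponent ℓ p) = ((bidegree p).1, (bidegree p).2 * ℓ) := by
  obtain ⟨k, rfl⟩ := Nat.exists_eq_add_one.2 hℓ
  refine Prod.ext rfl ?_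
  simp only [bidegree, cartierExponent, Nat.add_sub_cancel]
  ring

theorem exists_cartierExponent_eq (hℓ : 0 < ℓ) {p : ℕ × Bool} (hp : ℓ ∣ (bidegree p).2) :
    ∃ p', cartierExponent ℓ p' = p := by
  obtain ⟨k, rfl⟩ := Nat.exists_eq_add_one.2 hℓ
  obtain ⟨c, hc⟩ := hp
  rcases p with ⟨a, _ | _⟩
  · exact ⟨(c, false), Prod.ext hc.symm rfl⟩
  · have hc : a + 1 = (k + 1) * c := hc
    have hpos : 0 < c := Nat.pos_of_mul_pos_left (hc.symm ▸ a.succ_pos : 0 < (k + 1) * c)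
    obtain ⟨c, rfl⟩ := Nat.exists_eq_add_one.2 hpos
    refine ⟨(c, true), Prod.ext ?_ rfl⟩
    simp only [cartierExponent, Nat.add_sub_cancel, Bool.toNat_true, mul_one]
    linarith

include h

theorem IsQuantumChar.theta_weight_eq_zero_iff (m : Fin n → ℕ × Bool) :
    theta q (weight m) = 0 ↔ ∃ m', cartierExponent ℓ ∘ m' = m := by
  rw [h.theta_eq_zero_iff]
  constructor
  · intro hm
    choose m' hm' using fun i => exists_cartierExponent_eq h.pos (hm i)
    exact ⟨m', funext hm'⟩
  · rintro ⟨m', rfl⟩ i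
    rw [weight, Function.comp_apply, bidegree_cartierExponent h.pos]
    exact dvd_mul_left _ _

theorem cartier_injective : Function.Injective (cartier (n := n) h) := by
  have hcomp : ⇑(cartier h).toLinearMap ∘ monomial 1 =
      monomial q (n := n) ∘ (cartierExponent ℓ ∘ ·) :=
    funext fun m => cartier_monomial h m
  have hindep : LinearIndependent K (⇑(cartier (n := n) h).toLinearMap ∘ monomial 1) :=
    hcomp ▸ (linearIndependent_monomial h.ne_zero).comp _
      (cartierExponent_injective h.pos).comp_left
  have hdisj := Submodule.range_ker_disjoint hindep
  rw [span_range_monomial, top_disjoint] at hdisj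
  exact LinearMap.ker_eq_bot.1 hdisj

theorem cartier_mem_span (a : OmegaAlg K 1 n) :
    cartier h a ∈ Submodule.span K (monomial q '' {m | theta q (weight m) = 0}) := by
  have hle : Submodule.span K (Set.range (monomial (1 : K))) ≤
      (Submodule.span K (monomial q '' {m | theta q (weight m) = 0})).comap
        (cartier (n := n) h).toLinearMap := by
    rw [Submodule.span_le]
    rintro _ ⟨m, rfl⟩
    exact Submodule.subset_span
      ⟨_, (h.theta_weight_eq_zero_iff _).2 ⟨m, rfl⟩, (cartier_monomial h m).symm⟩
  exact hle (span_range_monomial (K := K) ▸ Submodule.mem_top)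

theorem map_cartier_piece (r d : ℕ) :
    (piece K 1 n r d).map (cartier h).toLinearMap = Submodule.span K
      (monomial q '' ({m | ∑ i, bidegree (m i) = (r, d * ℓ)} ∩ {m | theta q (weight m) = 0})) := by
  have hdegree (m : Fin n → ℕ × Bool) :
      ∑ i, bidegree ((cartierExponent ℓ ∘ m) i) = (r, d * ℓ) ↔ ∑ i, bidegree (m i) = (r, d) := by
    simp [bidegree_cartierExponent h.pos, Prod.ext_iff, Prod.fst_sum, Prod.snd_sum,
      ← Finset.sum_mul, h.pos.ne']
  rw [piece_eq_span_monomial, Submodule.map_span, Set.image_image]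
  congr 1
  ext z
  constructor
  · rintro ⟨m, hm, rfl⟩
    exact ⟨_, ⟨(hdegree m).2 hm, (h.theta_weight_eq_zero_iff _).2 ⟨m, rfl⟩⟩,
      (cartier_monomial h m).symm⟩
  · rintro ⟨m, ⟨hm, htheta⟩, rfl⟩
    obtain ⟨m, rfl⟩ := (h.theta_weight_eq_zero_iff m).1 htheta
    exact ⟨m, (hdegree m).1 hm, cartier_monomial h m⟩

theorem cartier_mem_piece {r d : ℕ} {a : OmegaAlg K 1 n} (ha : a ∈ piece K 1 n r d) :
    cartier h a ∈ piece K q n r (d * ℓ) := by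
  have hmap := Submodule.mem_map_of_mem (f := (cartier h).toLinearMap) ha
  rw [map_cartier_piece] at hmap
  rw [piece_eq_span_monomial]
  exact Submodule.span_mono (Set.image_mono Set.inter_subset_left) hmap

variable {δ : OmegaAlg K q n →ₗ[K] OmegaAlg K q n} (hδ : IsDeRham K q n δ)
include hδ

theorem exists_mem_piece_sub_cartier_mem_range {r d : ℕ} {z : OmegaAlg K q n}
    (hz : z ∈ piece K q n r (d * ℓ)) (hδz : δ z = 0) :
    ∃ a ∈ piece K 1 n r d, z - cartier h a ∈ LinearMap.range δ := by
  rw [piece_eq_span_monomial] at hz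
  obtain ⟨y, hy, hrange⟩ := hδ.exists_mem_span_sub_mem_range h.ne_zero _ hz hδz
  rw [← map_cartier_piece h] at hy
  obtain ⟨a, ha, rfl⟩ := hy
  exact ⟨a, ha, hrange⟩

theorem mem_range_of_mem_piece_of_not_dvd {r d : ℕ} (hd : ¬ ℓ ∣ d) {z : OmegaAlg K q n}
    (hz : z ∈ piece K q n r d) (hδz : δ z = 0) : z ∈ LinearMap.range δ := by
  have hempty : {m : Fin n → ℕ × Bool | ∑ i, bidegree (m i) = (r, d)} ∩
      {m | theta q (weight m) = 0} = ∅ := by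
    refine Set.eq_empty_of_forall_notMem ?_
    rintro m ⟨hm, htheta⟩
    have hdegree : ∑ i, weight m i = d := Prod.snd_sum.symm.trans (congrArg Prod.snd hm)
    exact hd (hdegree ▸ Finset.dvd_sum fun i _ => (h.theta_eq_zero_iff _).1 htheta i)
  rw [piece_eq_span_monomial] at hz
  obtain ⟨y, hy, hrange⟩ := hδ.exists_mem_span_sub_mem_range h.ne_zero _ hz hδz
  rw [hempty, Set.image_empty, Submodule.span_empty, Submodule.mem_bot] at hy
  rwa [hy, sub_zero] at hrange

end Cartier

end OmegaAlg

theorem stmt14_general {K : Type*} [Field K] {q : K} {ℓ : ℕ} (hq : OmegaAlg.IsQuantumChar q ℓ)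
    {n : ℕ} {δ : OmegaAlg K q n →ₗ[K] OmegaAlg K q n} (hδ : OmegaAlg.IsDeRham K q n δ) :
    ∃ c : OmegaAlg K 1 n →ₐ[K] OmegaAlg K q n,
      (∀ i, c (OmegaAlg.X K 1 n i) = OmegaAlg.X K q n i ^ ℓ) ∧
      (∀ i, c (OmegaAlg.Y K 1 n i) = OmegaAlg.X K q n i ^ (ℓ - 1) * OmegaAlg.Y K q n i) ∧
      (∀ a, δ (c a) = 0) ∧
      (∀ i d, ∀ a ∈ OmegaAlg.piece K 1 n i d, c a ∈ OmegaAlg.piece K q n i (d * ℓ)) ∧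
      (∀ a, c a ∈ LinearMap.range δ → a = 0) ∧
      (∀ i d, ∀ z ∈ OmegaAlg.piece K q n i (d * ℓ), δ z = 0 →
        ∃ a ∈ OmegaAlg.piece K 1 n i d, z - c a ∈ LinearMap.range δ) ∧
      (∀ i d, ¬ ℓ ∣ d → ∀ z ∈ OmegaAlg.piece K q n i d, δ z = 0 → z ∈ LinearMap.range δ) := by
  refine ⟨OmegaAlg.cartier hq, OmegaAlg.cartier_X hq, OmegaAlg.cartier_Y hq, fun a => ?_,
    fun _ _ _ => OmegaAlg.cartier_mem_piece hq, fun a ha => ?_,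
    fun _ _ _ => OmegaAlg.exists_mem_piece_sub_cartier_mem_range hq hδ,
    fun _ _ hd _ => OmegaAlg.mem_range_of_mem_piece_of_not_dvd hq hδ hd⟩
  · exact hδ.apply_eq_zero_of_mem_span hq.ne_zero (OmegaAlg.cartier_mem_span hq a)
  · have hzero := hδ.eq_zero_of_mem_span_of_mem_range hq.ne_zero (OmegaAlg.cartier_mem_span hq a) ha
    exact (map_eq_zero_iff _ (OmegaAlg.cartier_injective hq)).1 hzero

/-- **quantum Cartier isomorphism.** Let `q` be a primitive `ℓ`-th root
of unity, `ℓ > 1` odd. The map sending `e_i ⊗ 1 ↦ [e_i^ℓ ⊗ 1]` and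
`1 ⊗ e_i ↦ [e_i^{ℓ−1} ⊗ e_i]` defines an isomorphism of bigraded algebras from the
classical algebra `S(V_n) ⊗ Λ(V_n)` (the case `q = 1`) onto the cohomology
`H•(Ω(n))` of the quantum de Rham complex: there is a `K`-linear map `c` from the
classical algebra to `Ω(n)` sending the generators as above, landing in cocycles,
multiplicative modulo coboundaries, bidegree-preserving (multiplying the polynomial
degree by `ℓ`), inducing an injection and a surjection onto cohomology; moreover the
cohomology vanishes in polynomial degrees not divisible by `ℓ`. -/
theorem stmt14 (K : Type*) [Field K] (q : K) (ℓ : ℕ) (hℓ : 1 < ℓ) (hodd : Odd ℓ)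
    (hq : IsPrimitiveRoot q ℓ) (n : ℕ)
    (δ : OmegaAlg K q n →ₗ[K] OmegaAlg K q n) (hδ : OmegaAlg.IsDeRham K q n δ) :
    ∃ c : OmegaAlg K 1 n →ₗ[K] OmegaAlg K q n,
      c 1 = 1 ∧
      (∀ i : Fin n, c (OmegaAlg.X K 1 n i) = OmegaAlg.X K q n i ^ ℓ) ∧
      (∀ i : Fin n, c (OmegaAlg.Y K 1 n i) =
          OmegaAlg.X K q n i ^ (ℓ - 1) * OmegaAlg.Y K q n i) ∧
      (∀ a : OmegaAlg K 1 n, δ (c a) = 0) ∧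
      (∀ a b : OmegaAlg K 1 n, c (a * b) - c a * c b ∈ LinearMap.range δ) ∧
      (∀ i d : ℕ, ∀ a ∈ OmegaAlg.piece K 1 n i d,
          c a ∈ OmegaAlg.piece K q n i (d * ℓ)) ∧
      (∀ i d : ℕ, ∀ a ∈ OmegaAlg.piece K 1 n i d,
          c a ∈ LinearMap.range δ → a = 0) ∧
      (∀ i d : ℕ, ∀ z ∈ OmegaAlg.piece K q n i (d * ℓ), δ z = 0 →
          ∃ a ∈ OmegaAlg.piece K 1 n i d, z - c a ∈ LinearMap.range δ) ∧
      (∀ i d : ℕ, ¬ (ℓ ∣ d) → ∀ z ∈ OmegaAlg.piece K q n i d, δ z = 0 →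
          z ∈ LinearMap.range δ) := by
  obtain ⟨c, hX, hY, hcocycle, hpiece, hinj, hsurj, hvanish⟩ :=
    stmt14_general (.of_isPrimitiveRoot hℓ hodd hq) hδ
  exact ⟨c.toLinearMap, map_one c, hX, hY, hcocycle, fun a b => ⟨0, by simp⟩, hpiece,
    fun _ _ a _ => hinj a, hsurj, hvanish⟩
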